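/- arXiv:math/9610212 — 4 statements merged into one kernel-verified Lean document; each statement's English description precedes it below -/
import Mathlib

section
/- Let K be a compact, hereditary subset of P_<∞(ℕ) and let γ be a countable ordinal. If A ∈ K \ K^{(γ)} and ∅ ∈ K^{(γ)}, then there exists a ∈ A such that A(<a) ∈ K^{(γ)} and A(a) ∉ K^{(γ)}. Moreover, (K_A)^{(γ)} = ∅, where K_A = { B ∈ K : A ⊆ B }. -/
open Ordinal

/-- The first uncountable ordinal. -/
noncomputable def omega1 : Ordinal := (Cardinal.aleph 1).ord

/-- The set of natural numbers coded by a point of the Cantor space `2^ℕ = ℕ → Bool`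
(which carries the product topology). -/
def toSet (x : ℕ → Bool) : Set ℕ := {n | x n = true}

/-- The set of limit points (the derived set) of a set in a topological space. -/
def limitPts {X : Type*} [TopologicalSpace X] (K : Set X) : Set X :=
  {x | x ∈ closure (K \ {x})}

/-- The transfinite iterates `K^{(o)}` of the derived-set operation:
`K^{(0)} = K`, `K^{(o+1)} = (K^{(o)})'`, and `K^{(o)} = ⋂_{p < o} K^{(p)}` at limits. -/
noncomputable def derivIter {X : Type*} [TopologicalSpace X] (K : Set X) (o : Ordinal) :
    Set X :=
  Ordinal.limitRecOn o K (fun _ IH => limitPts IH)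
    (fun o _ IH => ⋂ (p : Ordinal) (h : p < o), IH p h)

/-!
Every iterated derived set `S = K^{(γ)}` of a closed hereditary family `K` is again closed and
hereditary. A closed family contains a set as soon as it contains `∅` and all the initial segments
`A ∩ [0, b]`, `b ∈ A`, because each finite part of the set is already visible in one of these.
So `A ∉ S` forces some `A ∩ [0, a]` with `a ∈ A` outside `S`; taking `a` least, all the
initial segments of `A ∩ [0, a)` lie in `S`, and hence so does `A ∩ [0, a)`. Moreover a point
`B` of `(K_A)^{(γ)} ⊆ K_A ∩ S` would contain `A` and put it in `S` by heredity.
-/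

open Set

section DerivIter

variable {X : Type*} [TopologicalSpace X] {K L : Set X}

theorem limitPts_eq_derivedSet (K : Set X) : limitPts K = derivedSet K := by
  ext x
  exact mem_closure_iff_clusterPt.trans accPt_principal_iff_clusterPt.symm

theorem derivIter_zero (K : Set X) : derivIter K 0 = K :=
  Ordinal.limitRecOn_zero ..

theorem derivIter_add_one (K : Set X) (o : Ordinal) :
    derivIter K (o + 1) = derivedSet (derivIter K o) :=
  (Ordinal.limitRecOn_add_one ..).trans (limitPts_eq_derivedSet _)

theorem derivIter_of_isSuccLimit (K : Set X) {o : Ordinal} (ho : Order.IsSuccLimit o) :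
    derivIter K o = ⋂ p < o, derivIter K p :=
  Ordinal.limitRecOn_limit _ _ _ _ ho

theorem derivIter_mono (h : K ⊆ L) (o : Ordinal) : derivIter K o ⊆ derivIter L o := by
  induction o using Ordinal.limitRecOn with
  | zero => simpa only [derivIter_zero] using h
  | add_one o ih => simpa only [derivIter_add_one] using derivedSet_mono _ _ ih
  | limit o ho ih => simpa only [derivIter_of_isSuccLimit _ ho] using iInter₂_mono ih

theorem isClosed_derivIter (hK : IsClosed K) (o : Ordinal) : IsClosed (derivIter K o) := by
  induction o using Ordinal.limitRecOn with
  | zero => rwa [derivIter_zero]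
  | add_one o ih =>
    rw [derivIter_add_one, isClosed_iff_derivedSet_subset]
    exact derivedSet_mono _ _ ((isClosed_iff_derivedSet_subset _).1 ih)
  | limit o ho ih =>
    rw [derivIter_of_isSuccLimit _ ho]
    exact isClosed_biInter ih

theorem derivIter_subset (hK : IsClosed K) (o : Ordinal) : derivIter K o ⊆ K := by
  induction o using Ordinal.limitRecOn with
  | zero => rw [derivIter_zero]
  | add_one o ih =>
    rw [derivIter_add_one]
    exact (derivedSet_mono _ _ ih).trans ((isClosed_iff_derivedSet_subset K).1 hK)
  | limit o ho ih =>
    rw [derivIter_of_isSuccLimit _ ho]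
    exact iInter₂_subset_of_subset 0 ho.bot_lt (ih 0 ho.bot_lt)

end DerivIter

section DiscretePi

variable {ι : Type*} {α : ι → Type*} [∀ i, TopologicalSpace (α i)] [∀ i, DiscreteTopology (α i)]
  {S : Set (∀ i, α i)} {x : ∀ i, α i}

theorem mem_closure_pi_discrete_iff :
    x ∈ closure S ↔ ∀ I : Set ι, I.Finite → ∃ z ∈ S, ∀ i ∈ I, z i = x i := by
  refine mem_closure_iff_nhds_basis ?_
  simpa only [nhds_pi, nhds_discrete] using! Filter.hasBasis_pi_pure x

theorem mem_derivedSet_pi_discrete_iff :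
    x ∈ derivedSet S ↔ ∀ I : Set ι, I.Finite → ∃ z ∈ S, z ≠ x ∧ ∀ i ∈ I, z i = x i := by
  simp only [← limitPts_eq_derivedSet, limitPts, mem_ofPred_eq, mem_closure_pi_discrete_iff,
    mem_sdiff, mem_singleton_iff, and_assoc]

end DiscretePi

section Hereditary

variable {ι : Type*} {K : Set (ι → Bool)}

-- If `z` agrees with `x ≥ y` on `I` and differs from it at `n`, then flipping the membership of
-- `n` in `y` and removing everything else outside `I` gives a point that agrees with `y` on `I`.
-- It lies below `z` if `n` belongs to `z`, and below `x` otherwise.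
theorem isLowerSet_derivedSet (hcl : IsClosed K) (hK : IsLowerSet K) :
    IsLowerSet (derivedSet K) := by
  classical
  intro x y hyx hx
  have hxK : x ∈ K := (isClosed_iff_derivedSet_subset K).1 hcl hx
  rw [mem_derivedSet_pi_discrete_iff] at hx ⊢
  intro I hI
  obtain ⟨z, hzK, hzx, hzI⟩ := hx I hI
  obtain ⟨n, hn⟩ := Function.ne_iff.1 hzx
  have hnI : n ∉ I := fun h => hn (hzI n h)
  have hpz : I.piecewise y ⊥ ≤ z :=
    piecewise_le (fun i hi => (hyx i).trans_eq (hzI i hi).symm) fun _ _ => bot_le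
  have hpx : I.piecewise y ⊥ ≤ x := piecewise_le (fun i _ => hyx i) fun _ _ => bot_le
  let w : ι → Bool := Function.update (I.piecewise y ⊥) n (!y n)
  have hwK : w ∈ K := by
    cases hzn : z n with
    | true => exact hK (update_le_iff.2 ⟨hzn ▸ Bool.le_true _, fun i _ => hpz i⟩) hzK
    | false =>
      have hxn : x n = true := by simpa [hzn] using hn
      exact hK (update_le_iff.2 ⟨hxn ▸ Bool.le_true _, fun i _ => hpx i⟩) hxK
  refine ⟨w, hwK, Function.ne_iff.2 ⟨n, by simp [w]⟩, fun i hi => ?_⟩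
  simp [w, ne_of_mem_of_not_mem hi hnI, hi]

theorem isLowerSet_derivIter (hcl : IsClosed K) (hK : IsLowerSet K) (o : Ordinal) :
    IsLowerSet (derivIter K o) := by
  induction o using Ordinal.limitRecOn with
  | zero => rwa [derivIter_zero]
  | add_one o ih =>
    rw [derivIter_add_one]
    exact isLowerSet_derivedSet (isClosed_derivIter hcl o) ih
  | limit o ho ih =>
    rw [derivIter_of_isSuccLimit _ ho]
    exact isLowerSet_iInter₂ ih

theorem derivIter_inter_Ici_eq_empty (hcl : IsClosed K) (hK : IsLowerSet K) {o : Ordinal}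
    {A : ι → Bool} (hA : A ∉ derivIter K o) : derivIter (K ∩ Ici A) o = ∅ := by
  have hIci : IsClosed (Ici A) := by
    rw [← pi_univ_Ici]
    exact isClosed_set_pi fun i _ => isClosed_discrete _
  refine eq_empty_of_forall_notMem fun B hB => hA ?_
  have hAB : A ≤ B := (derivIter_subset (hcl.inter hIci) o hB).2
  exact isLowerSet_derivIter hcl hK o hAB (derivIter_mono inter_subset_left o hB)

end Hereditary

section InitialSegments

variable {ι : Type*} [LinearOrder ι] {S : Set (ι → Bool)} {x : ι → Bool}

theorem mem_of_forall_initialSegment_mem (hS : IsClosed S) (hbot : ⊥ ∈ S)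
    (h : ∀ b, x b = true → (fun i => x i && decide (i ≤ b)) ∈ S) : x ∈ S := by
  rw [← hS.closure_eq, mem_closure_pi_discrete_iff]
  intro I hI
  obtain hempty | hne := {i ∈ I | x i = true}.eq_empty_or_nonempty
  · refine ⟨⊥, hbot, fun i hi => ?_⟩
    have hxi : x i = false := by simpa using fun hxi => hempty.subset ⟨hi, hxi⟩
    exact hxi.symm
  · obtain ⟨b, ⟨-, hxb⟩, hb⟩ := exists_max_image _ id (hI.sep _) hne
    refine ⟨_, h b hxb, fun i hi => ?_⟩
    cases hxi : x i with
    | false => rfl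
    | true => simpa using hb i ⟨hi, hxi⟩

theorem exists_initialSegment_mem_notMem [WellFoundedLT ι] (hS : IsClosed S) (hbot : ⊥ ∈ S)
    (hx : x ∉ S) :
    ∃ a, x a = true ∧ (fun i => x i && decide (i < a)) ∈ S ∧
      (fun i => x i && decide (i ≤ a)) ∉ S := by
  have hex : ∃ b, x b = true ∧ (fun i => x i && decide (i ≤ b)) ∉ S := by
    contrapose! hx
    exact mem_of_forall_initialSegment_mem hS hbot hx
  obtain ⟨a, ⟨hxa, ha⟩, hmin⟩ := exists_minimal_of_wellFoundedLT _ hex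
  refine ⟨a, hxa, mem_of_forall_initialSegment_mem hS hbot fun b hb => ?_, ha⟩
  obtain ⟨hxb, hba⟩ : x b = true ∧ b < a := by simpa using hb
  have hbS : (fun i => x i && decide (i ≤ b)) ∈ S := by
    by_contra hbS
    exact (hmin ⟨hxb, hbS⟩ hba.le).not_gt hba
  convert hbS using 2 with i
  by_cases hib : i ≤ b
  · simp [hib, hib.trans_lt hba]
  · simp [hib]

end InitialSegments

theorem exists_cut_point_general {ι : Type*} [LinearOrder ι] [WellFoundedLT ι]
    {K : Set (ι → Bool)} (hcl : IsClosed K) (hK : IsLowerSet K) (γ : Ordinal) {A : ι → Bool}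
    (hA : A ∉ derivIter K γ) (hempty : ⊥ ∈ derivIter K γ) :
    (∃ a, A a = true ∧ (fun i => A i && decide (i < a)) ∈ derivIter K γ ∧
      (fun i => A i && decide (i ≤ a)) ∉ derivIter K γ) ∧
    derivIter (K ∩ Ici A) γ = ∅ :=
  ⟨exists_initialSegment_mem_notMem (isClosed_derivIter hcl γ) hempty hA,
    derivIter_inter_Ici_eq_empty hcl hK hA⟩

/-- Let `K ⊆ P_<∞(ℕ)` (subsets of `ℕ` coded as points of the Cantor space `2^ℕ`) be
compact and hereditary, and let `γ` be a countable ordinal.  If `A ∈ K \ K^{(γ)}` and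
`∅ ∈ K^{(γ)}`, then there is `a ∈ A` with `A(<a) ∈ K^{(γ)}` and `A(a) ∉ K^{(γ)}`
(where `A(<a) = A ∩ [0,a)` and `A(a) = A ∩ [0,a]`).  Moreover `(K_A)^{(γ)} = ∅`,
where `K_A = {B ∈ K : A ⊆ B}`. -/
theorem exists_cut_point (K : Set (ℕ → Bool))
    (hKfin : ∀ x ∈ K, (toSet x).Finite)
    (hKcpt : IsCompact K)
    (hKher : ∀ x y : ℕ → Bool, (∀ n, x n = true → y n = true) → y ∈ K → x ∈ K)
    (γ : Ordinal) (hγ : γ < omega1)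
    (A : ℕ → Bool) (hA : A ∈ K) (hA' : A ∉ derivIter K γ)
    (hempty : (fun _ : ℕ => false) ∈ derivIter K γ) :
    (∃ a : ℕ, A a = true ∧
      (fun n => A n && decide (n < a)) ∈ derivIter K γ ∧
      (fun n => A n && decide (n ≤ a)) ∉ derivIter K γ) ∧
    derivIter {y ∈ K | ∀ n, A n = true → y n = true} γ = ∅ :=
  exists_cut_point_general hKcpt.isClosed (fun y x hxy hy => hKher x y hxy hy) γ hA' hempty
end

section
/- Let M be a nondegenerate Orlicz function and suppose there exists η > 0 such that lim_{t→0} M(ηt)/M(t) = 0. Then there is a real sequence (δ_n)_{n≥1} strictly decreasing to 0 such that whenever a = (a_k) is an element of h_M with ‖a‖ = 1/η, either sup_k |a_k| > δ_1, or there exists n ∈ ℕ such that ‖a χ_{A_n}‖ ≥ 1, where A_n = { k : δ_{n+1} < |a_k| ≤ δ_n } and a χ_{A_n} denotes the sequence equal to a on A_n and 0 elsewhere. -/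
open Ordinal Filter Topology

/-- Membership in the Orlicz sequence space `h_M` : `Σₖ M (c * |aₖ|) < ∞` for every
`c < ∞`. -/
def MemHM (M : ℝ → ℝ) (a : ℕ → ℝ) : Prop :=
  ∀ c : ℝ, Summable fun k => M (c * |a k|)

/-- The Orlicz norm `‖a‖_M = inf { ρ > 0 : Σₖ M (|aₖ| / ρ) ≤ 1 }`. -/
noncomputable def orliczNorm (M : ℝ → ℝ) (a : ℕ → ℝ) : ℝ :=
  sInf {ρ : ℝ | 0 < ρ ∧ (∑' k, M (|a k| / ρ)) ≤ 1}

/-- `M` is a nondegenerate Orlicz function : increasing and convex on `[0, ∞)` with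
`M 0 = 0`, `M 1 = 1`, and `M t > 0` for all `t > 0`. -/
structure IsOrlicz (M : ℝ → ℝ) : Prop where
  mono : MonotoneOn M (Set.Ici 0)
  convex : ConvexOn ℝ (Set.Ici 0) M
  zero : M 0 = 0
  one : M 1 = 1
  pos : ∀ t : ℝ, 0 < t → 0 < M t

/-!
Choose `δ` so that `M (η * t) ≤ 2 ^ (-(n + 2)) * M t` for `0 < t ≤ δ n`. If `|aₖ| ≤ δ 0` for all `k`
and every `‖a χ_{Aₙ}‖` is less than `1`, then `∑_{k ∈ Aₙ} M |aₖ| ≤ 1` for every `n`; since the sets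
`Aₙ` cover the support of `a`, it follows that `∑ₖ M (η |aₖ|) ≤ ∑ₙ 2 ^ (-(n + 2)) = 1 / 2`. By
convexity the sum is still at most `1` when `η` is replaced by a slightly larger number, so
`‖a‖ < 1 / η`.
-/

theorem exists_strictAnti_tendsto_forall_Ioc {α : Type*} [LinearOrder α] [TopologicalSpace α]
    [OrderTopology α] [DenselyOrdered α] [NoMaxOrder α] [FirstCountableTopology α] {x : α}
    {p : ℕ → α → Prop} (hp : ∀ n, ∀ᶠ t in 𝓝[>] x, p n t) :
    ∃ δ : ℕ → α, StrictAnti δ ∧ (∀ n, x < δ n) ∧ Tendsto δ atTop (𝓝 x) ∧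
      ∀ n, ∀ t ∈ Set.Ioc x (δ n), p n t := by
  obtain ⟨u, hanti, hlt, hu⟩ := exists_seq_strictAnti_tendsto x
  have hev : ∀ n, ∀ᶠ m in atTop, ∀ t ∈ Set.Ioc x (u m), p n t := by
    intro n
    obtain ⟨b, hb, hsub⟩ := mem_nhdsGT_iff_exists_Ioc_subset.1 (hp n)
    filter_upwards [hu.eventually_le_const hb] with m hm t ht
    exact hsub ⟨ht.1, ht.2.trans hm⟩
  obtain ⟨φ, hφ, hpφ⟩ := extraction_forall_of_eventually hev
  exact ⟨u ∘ φ, hanti.comp_strictMono hφ, fun n => hlt (φ n), hu.comp hφ.tendsto_atTop, hpφ⟩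

theorem exists_succ_lt_and_le {α : Type*} [LinearOrder α] {δ : ℕ → α} {x : α} (h₀ : x ≤ δ 0)
    (hlt : ∃ n, δ n < x) : ∃ n, δ (n + 1) < x ∧ x ≤ δ n := by
  by_contra! hstep
  have hle : ∀ n, x ≤ δ n := by
    intro n
    induction n with
    | zero => exact h₀
    | succ n ih => exact not_lt.1 fun h => (hstep n h).not_ge ih
  obtain ⟨n, hn⟩ := hlt
  exact (hle n).not_gt hn

theorem tsum_le_tsum_of_le_mul_on_cover {ι κ : Type*} {f g : ι → ℝ} {w : κ → ℝ} {A : κ → Set ι}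
    (hf : 0 ≤ f) (hg : 0 ≤ g) (hw : 0 ≤ w) (hw_sum : Summable w)
    (hf_sum : ∀ n, Summable ((A n).indicator f)) (hf_le : ∀ n, ∑' k, (A n).indicator f k ≤ 1)
    (hcover : Function.support g ⊆ ⋃ n, A n) (hgf : ∀ n, ∀ k ∈ A n, g k ≤ w n * f k) :
    ∑' k, g k ≤ ∑' n, w n := by
  have hnonneg : ∀ n k, 0 ≤ w n * (A n).indicator f k := fun n k =>
    mul_nonneg (hw n) (Set.indicator_nonneg (fun k _ => hf k) k)
  have hsum : ∀ k, Summable fun n => w n * (A n).indicator f k := fun k =>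
    (hw_sum.mul_right (f k)).of_nonneg_of_le (fun n => hnonneg n k) fun n =>
      mul_le_mul_of_nonneg_left (Set.indicator_le_self' (fun k _ => hf k) k) (hw n)
  have hle : ∀ k, g k ≤ ∑' n, w n * (A n).indicator f k := by
    intro k
    by_cases hk : g k = 0
    · exact hk.trans_le (tsum_nonneg fun n => hnonneg n k)
    · obtain ⟨n, hn⟩ := Set.mem_iUnion.1 (hcover hk)
      calc g k ≤ w n * (A n).indicator f k := by
            simpa only [Set.indicator_of_mem hn] using hgf n k hn
        _ ≤ ∑' n, w n * (A n).indicator f k := (hsum k).le_tsum n fun m _ => hnonneg m k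
  refine Real.tsum_le_of_sum_le hg fun F => ?_
  calc ∑ k ∈ F, g k ≤ ∑ k ∈ F, ∑' n, w n * (A n).indicator f k :=
        Finset.sum_le_sum fun k _ => hle k
    _ = ∑' n, ∑ k ∈ F, w n * (A n).indicator f k :=
        (Summable.tsum_finsetSum fun k _ => hsum k).symm
    _ ≤ ∑' n, w n := (summable_sum fun k _ => hsum k).tsum_le_tsum (fun n => ?_) hw_sum
  rw [← Finset.mul_sum]
  exact mul_le_of_le_one_right (hw n) <|
    ((hf_sum n).sum_le_tsum F fun k _ => Set.indicator_nonneg (fun k _ => hf k) k).trans (hf_le n)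

theorem orliczNorm_le_one_div {M : ℝ → ℝ} {a : ℕ → ℝ} {c : ℝ} (hc : 0 < c)
    (hle : ∑' k, M (c * |a k|) ≤ 1) : orliczNorm M a ≤ 1 / c := by
  refine csInf_le ⟨0, fun ρ hρ => hρ.1.le⟩ ⟨one_div_pos.2 hc, ?_⟩
  simpa only [div_div_eq_mul_div, _root_.div_one, mul_comm] using hle

namespace IsOrlicz

variable {M : ℝ → ℝ}

theorem map_le_map (hM : IsOrlicz M) {s t : ℝ} (hs : 0 ≤ s) (hst : s ≤ t) : M s ≤ M t :=
  hM.mono hs (hs.trans hst) hst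

theorem map_nonneg (hM : IsOrlicz M) {t : ℝ} (ht : 0 ≤ t) : 0 ≤ M t :=
  hM.zero.symm.trans_le (hM.map_le_map le_rfl ht)

theorem map_div_le (hM : IsOrlicz M) {t ρ : ℝ} (ht : 0 ≤ t) (hρ : 1 ≤ ρ) :
    M (t / ρ) ≤ M t / ρ := by
  have hconv := hM.convex.2 ht (le_refl (0 : ℝ)) (inv_nonneg.2 (zero_le_one.trans hρ))
    (sub_nonneg.2 (inv_le_one_of_one_le₀ hρ)) (add_sub_cancel _ _)
  simpa only [_root_.smul_eq_mul, hM.zero, mul_zero, add_zero, inv_mul_eq_div] using hconv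

section Modular

variable {ι : Type*} {a : ι → ℝ} {c d : ℝ}

theorem summable_of_le (hM : IsOrlicz M) (hc : 0 ≤ c) (hcd : c ≤ d)
    (ha : Summable fun k => M (d * |a k|)) : Summable fun k => M (c * |a k|) :=
  ha.of_nonneg_of_le (fun _ => hM.map_nonneg (by positivity)) fun _ =>
    hM.map_le_map (by positivity) (by gcongr)

theorem finite_setOf_lt_abs (hM : IsOrlicz M) (hc : 0 < c) (hd : 0 < d)
    (ha : Summable fun k => M (c * |a k|)) : {k | d < |a k|}.Finite := by
  have hsmall : ∀ᶠ k in cofinite, M (c * |a k|) < M (c * d) :=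
    ha.tendsto_cofinite_zero.eventually_lt_const (hM.pos _ (mul_pos hc hd))
  refine (eventually_cofinite.1 hsmall).subset fun k hk => not_lt.2 ?_
  exact hM.map_le_map (by positivity) (mul_le_mul_of_nonneg_left (le_of_lt hk) hc.le)

theorem exists_tsum_div_le_one (hM : IsOrlicz M)
    (ha : ∀ ρ, 0 < ρ → Summable fun k => M (|a k| / ρ)) :
    ∃ ρ, 0 < ρ ∧ ∑' k, M (|a k| / ρ) ≤ 1 := by
  have ha₁ : Summable fun k => M |a k| := by simpa only [_root_.div_one] using ha 1 one_pos
  set ρ := max 1 (∑' k, M |a k|)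
  have hρ : 1 ≤ ρ := le_max_left _ _
  have hρ₀ : 0 < ρ := one_pos.trans_le hρ
  refine ⟨ρ, hρ₀, ?_⟩
  calc ∑' k, M (|a k| / ρ) ≤ ∑' k, M |a k| / ρ :=
        (ha ρ hρ₀).tsum_le_tsum (fun k => hM.map_div_le (abs_nonneg _) hρ) (ha₁.div_const ρ)
    _ = (∑' k, M |a k|) / ρ := tsum_div_const
    _ ≤ 1 := div_le_one_of_le₀ (le_max_right _ _) hρ₀.le

theorem tsum_convexComb_le (hM : IsOrlicz M) (hc : 0 ≤ c) (hcd : c ≤ d)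
    (ha : Summable fun k => M (d * |a k|)) {s t : ℝ} (hs : 0 ≤ s) (ht : 0 ≤ t) (hst : s + t = 1) :
    ∑' k, M ((s * c + t * d) * |a k|) ≤ s * ∑' k, M (c * |a k|) + t * ∑' k, M (d * |a k|) := by
  have hd : 0 ≤ d := hc.trans hcd
  have ha_c : Summable fun k => M (c * |a k|) := hM.summable_of_le hc hcd ha
  have ha_comb : Summable fun k => M ((s * c + t * d) * |a k|) :=
    hM.summable_of_le (by positivity) (by nlinarith) ha
  have hpoint : ∀ k, M ((s * c + t * d) * |a k|) ≤ s * M (c * |a k|) + t * M (d * |a k|) := by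
    intro k
    rw [add_mul, mul_assoc, mul_assoc]
    exact hM.convex.2 (mul_nonneg hc (abs_nonneg _)) (mul_nonneg hd (abs_nonneg _)) hs ht hst
  calc ∑' k, M ((s * c + t * d) * |a k|)
      ≤ ∑' k, (s * M (c * |a k|) + t * M (d * |a k|)) :=
        ha_comb.tsum_le_tsum hpoint ((ha_c.mul_left s).add (ha.mul_left t))
    _ = s * ∑' k, M (c * |a k|) + t * ∑' k, M (d * |a k|) := by
        rw [(ha_c.mul_left s).tsum_add (ha.mul_left t), tsum_mul_left, tsum_mul_left]

theorem exists_gt_tsum_le_one (hM : IsOrlicz M) (hc : 0 ≤ c) (hcd : c < d)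
    (ha : Summable fun k => M (d * |a k|)) (hlt : ∑' k, M (c * |a k|) < 1) :
    ∃ b, c < b ∧ ∑' k, M (b * |a k|) ≤ 1 := by
  set chord : ℝ → ℝ := fun t => (1 - t) * ∑' k, M (c * |a k|) + t * ∑' k, M (d * |a k|)
  have hchord : Tendsto chord (𝓝[>] 0) (𝓝 (∑' k, M (c * |a k|))) := by
    have hcont : Continuous chord := by fun_prop
    exact (hcont.tendsto' 0 _ (by simp [chord])).mono_left nhdsWithin_le_nhds
  obtain ⟨t, htchord, ht₀, ht₁⟩ :=
    ((hchord.eventually_le_const hlt).and (Ioo_mem_nhdsGT one_pos)).exists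
  refine ⟨(1 - t) * c + t * d, by nlinarith, ?_⟩
  exact (hM.tsum_convexComb_le hc hcd.le ha (sub_nonneg.2 ht₁.le) ht₀.le
    (sub_add_cancel 1 t)).trans htchord

end Modular

variable {a : ℕ → ℝ}

theorem orliczNorm_lt_one_div (hM : IsOrlicz M) {c d : ℝ} (hc : 0 < c) (hcd : c < d)
    (ha : Summable fun k => M (d * |a k|)) (hlt : ∑' k, M (c * |a k|) < 1) :
    orliczNorm M a < 1 / c := by
  obtain ⟨b, hcb, hb⟩ := hM.exists_gt_tsum_le_one hc.le hcd ha hlt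
  exact (orliczNorm_le_one_div (hc.trans hcb) hb).trans_lt (one_div_lt_one_div_of_lt hc hcb)

theorem tsum_le_one_of_orliczNorm_lt_one (hM : IsOrlicz M)
    (ha : ∀ ρ, 0 < ρ → Summable fun k => M (|a k| / ρ)) (hlt : orliczNorm M a < 1) :
    ∑' k, M |a k| ≤ 1 := by
  obtain ⟨ρ, ⟨hρ₀, hρ⟩, hρ₁⟩ := exists_lt_of_csInf_lt (hM.exists_tsum_div_le_one ha) hlt
  have ha₁ : Summable fun k => M |a k| := by simpa only [_root_.div_one] using ha 1 one_pos
  refine (ha₁.tsum_le_tsum (fun k => ?_) (ha ρ hρ₀)).trans hρ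
  exact hM.map_le_map (abs_nonneg _) (le_div_self (abs_nonneg _) hρ₀ hρ₁.le)

theorem tsum_indicator_le_one_of_orliczNorm_lt_one (hM : IsOrlicz M) {A : Set ℕ} (hA : A.Finite)
    (hlt : orliczNorm M (A.indicator a) < 1) : ∑' k, A.indicator (fun k => M |a k|) k ≤ 1 := by
  have hcomp : ∀ k, A.indicator (fun k => M |a k|) k = M |A.indicator a k| := fun k =>
    congrFun (Set.indicator_comp_of_zero (g := fun x => M |x|) (by simp [hM.zero])) k
  simp only [hcomp]
  refine hM.tsum_le_one_of_orliczNorm_lt_one (fun ρ _ => ?_) hlt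
  refine summable_of_ne_finset_zero (s := hA.toFinset) fun k hk => ?_
  have hkA : k ∉ A := by simpa using hk
  simp [Set.indicator_of_notMem hkA, hM.zero]

theorem tsum_le_of_orliczNorm_levels_lt_one (hM : IsOrlicz M) {δ w : ℕ → ℝ} {c η : ℝ}
    (hη : 0 < η) (hc : 0 < c) (ha : Summable fun k => M (c * |a k|))
    (hpos : ∀ n, 0 < δ n) (hδ : Tendsto δ atTop (𝓝 0)) (hw : 0 ≤ w) (hw_sum : Summable w)
    (hδw : ∀ n, ∀ t ∈ Set.Ioc 0 (δ n), M (η * t) ≤ w n * M t) (hle : ∀ k, |a k| ≤ δ 0)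
    (hlt : ∀ n, orliczNorm M (Set.indicator {k | δ (n + 1) < |a k| ∧ |a k| ≤ δ n} a) < 1) :
    ∑' k, M (η * |a k|) ≤ ∑' n, w n := by
  set A : ℕ → Set ℕ := fun n => {k | δ (n + 1) < |a k| ∧ |a k| ≤ δ n}
  have hfin : ∀ n, (A n).Finite := fun n =>
    (hM.finite_setOf_lt_abs hc (hpos (n + 1)) ha).subset fun k hk => hk.1
  refine tsum_le_tsum_of_le_mul_on_cover (A := A) (f := fun k => M |a k|)
    (fun k => hM.map_nonneg (abs_nonneg _)) (fun k => hM.map_nonneg (by positivity)) hw hw_sum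
    (fun n => summable_of_hasFiniteSupport ((hfin n).subset Set.support_indicator_subset))
    (fun n => hM.tsum_indicator_le_one_of_orliczNorm_lt_one (hfin n) (hlt n))
    (fun k hk => Set.mem_iUnion.2 ?_)
    (fun n k hk => hδw n _ ⟨(hpos (n + 1)).trans hk.1, hk.2⟩)
  have hak : 0 < |a k| := abs_pos.2 fun h => hk (by simp [h, hM.zero])
  exact exists_succ_lt_and_le (hle k) (hδ.eventually_lt_const hak).exists

end IsOrlicz

theorem exists_levels_general {M : ℝ → ℝ} (hM : IsOrlicz M) {η : ℝ} (hη : 0 < η)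
    (hlim : Tendsto (fun t => M (η * t) / M t) (𝓝[>] (0 : ℝ)) (𝓝 0)) :
    ∃ δ : ℕ → ℝ, StrictAnti δ ∧ (∀ n, 0 < δ n) ∧ Tendsto δ atTop (𝓝 (0 : ℝ)) ∧
      ∀ (a : ℕ → ℝ) (c : ℝ), η < c → Summable (fun k => M (c * |a k|)) → 1 / η ≤ orliczNorm M a →
        (∃ k, δ 0 < |a k|) ∨
        ∃ n : ℕ, 1 ≤ orliczNorm M
          (Set.indicator {k | δ (n + 1) < |a k| ∧ |a k| ≤ δ n} a) := by
  set w : ℕ → ℝ := fun n => 1 / 2 / 2 / 2 ^ n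
  have hw_pos : ∀ n, 0 < w n := fun n => by positivity
  have hsmall : ∀ n, ∀ᶠ t in 𝓝[>] (0 : ℝ), M (η * t) ≤ w n * M t := by
    intro n
    filter_upwards [hlim.eventually_le_const (hw_pos n), self_mem_nhdsWithin] with t hratio ht
    exact (div_le_iff₀ (hM.pos t ht)).1 hratio
  obtain ⟨δ, hanti, hpos, hδ, hδw⟩ := exists_strictAnti_tendsto_forall_Ioc hsmall
  refine ⟨δ, hanti, hpos, hδ, fun a c hηc ha hnorm => ?_⟩
  by_contra! ⟨hle, hlt⟩
  have hsum : ∑' k, M (η * |a k|) ≤ 1 / 2 :=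
    (hM.tsum_le_of_orliczNorm_levels_lt_one hη (hη.trans hηc) ha hpos hδ (fun n => (hw_pos n).le)
      (summable_geometric_two' _) hδw hle hlt).trans_eq (tsum_geometric_two' _)
  exact (hM.orliczNorm_lt_one_div hη hηc ha (by linarith)).not_ge hnorm

/-- Let `M` be a nondegenerate Orlicz function with `lim_{t→0} M(ηt)/M(t) = 0` for some
`η > 0`.  Then there is a sequence `(δₙ)` strictly decreasing to `0` such that for every
`a ∈ h_M` with `‖a‖ = 1/η`, either `sup |aₖ| > δ₁`, or `‖a χ_{Aₙ}‖ ≥ 1` for some `n`,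
where `Aₙ = { k : δ_{n+1} < |aₖ| ≤ δₙ }`. -/
theorem exists_levels (M : ℝ → ℝ) (hM : IsOrlicz M)
    (η : ℝ) (hη : 0 < η)
    (hlim : Tendsto (fun t => M (η * t) / M t) (𝓝[>] (0 : ℝ)) (𝓝 0)) :
    ∃ δ : ℕ → ℝ, StrictAnti δ ∧ (∀ n, 0 < δ n) ∧ Tendsto δ atTop (𝓝 (0 : ℝ)) ∧
      ∀ a : ℕ → ℝ, MemHM M a → orliczNorm M a = 1 / η →
        (∃ k, δ 0 < |a k|) ∨
        ∃ n : ℕ, 1 ≤ orliczNorm M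
          (Set.indicator {k | δ (n + 1) < |a k| ∧ |a k| ≤ δ n} a) := by
  obtain ⟨δ, hanti, hpos, hδ, h⟩ := exists_levels_general hM hη hlim
  exact ⟨δ, hanti, hpos, hδ, fun a ha hnorm => h a (η + 1) (lt_add_one η) (ha _) hnorm.ge⟩
end

section
/- A Banach space E is isomorphic to a subspace of C(K) for a compact Hausdorff topological space K if and only if the dual space E' contains a norming subset W which, when endowed with the weak* topology, is a continuous image of K. -/
open Filter Topology

/-!
An operator `T` into a space of bounded continuous functions on `K` is the same thing as the
uniformly bounded family of its coordinates `x ↦ T x k`, which depends continuously on `k` in the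
topology of pointwise convergence. As `‖T x‖` is the supremum over `k` of the `‖T x k‖`, the
operator is bounded below exactly when the family of its coordinates is norming.
-/

theorem exists_two_sided_bound_iff {α R : Type*} [Field R] [LinearOrder R] [IsStrictOrderedRing R]
    {f g : α → R} (hf : ∀ a, 0 ≤ f a) :
    (∃ C > 0, ∀ a, C⁻¹ * g a ≤ f a ∧ f a ≤ C * g a) ↔
      (∃ M, ∀ a, g a ≤ M * f a) ∧ ∃ c > 0, ∀ a, c * f a ≤ g a := by
  constructor
  · rintro ⟨C, hC, h⟩
    exact ⟨⟨C, fun a => (inv_mul_le_iff₀ hC).1 (h a).1⟩,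
      C⁻¹, inv_pos.2 hC, fun a => (inv_mul_le_iff₀ hC).2 (h a).2⟩
  · rintro ⟨⟨M, hM⟩, c, hc, hcg⟩
    have hC : 0 < max M c⁻¹ := lt_max_of_lt_right (inv_pos.2 hc)
    refine ⟨max M c⁻¹, hC, fun a => ⟨(inv_mul_le_iff₀ hC).2 ?_, ?_⟩⟩
    · calc g a ≤ M * f a := hM a
        _ ≤ max M c⁻¹ * f a := mul_le_mul_of_nonneg_right (le_max_left _ _) (hf a)
    · have hg : 0 ≤ g a := (mul_nonneg hc.le (hf a)).trans (hcg a)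
      calc f a ≤ c⁻¹ * g a := (le_inv_mul_iff₀ hc).2 (hcg a)
        _ ≤ max M c⁻¹ * g a := mul_le_mul_of_nonneg_right (le_max_right _ _) hg

section NormingFamily

open BoundedContinuousFunction Set

variable {ι K 𝕜 E F : Type*} [NontriviallyNormedField 𝕜]
  [SeminormedAddCommGroup E] [NormedSpace 𝕜 E] [SeminormedAddCommGroup F] [NormedSpace 𝕜 F]

/-- A family of operators `φ i : E → F` is norming if `x ↦ ⨆ i, ‖φ i x‖` is equivalent to the norm
of `E`; for `F = 𝕜` this says that the set of functionals `φ i` is a norming subset of the dual.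
Pointwise boundedness is part of the definition because a real supremum over an unbounded set is
`0`. -/
def IsNormingFamily (φ : ι → E →L[𝕜] F) : Prop :=
  (∀ x, BddAbove (range fun i => ‖φ i x‖)) ∧
    ∃ C > (0 : ℝ), ∀ x, C⁻¹ * (⨆ i, ‖φ i x‖) ≤ ‖x‖ ∧ ‖x‖ ≤ C * ⨆ i, ‖φ i x‖

theorem IsNormingFamily.exists_norm_apply_le {φ : ι → E →L[𝕜] F} (hφ : IsNormingFamily φ) :
    ∃ C, 0 ≤ C ∧ ∀ i x, ‖φ i x‖ ≤ C * ‖x‖ := by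
  obtain ⟨hbdd, C, hC, h⟩ := hφ
  exact ⟨C, hC.le, fun i x => (le_ciSup (hbdd x) i).trans ((inv_mul_le_iff₀ hC).1 (h x).1)⟩

variable [TopologicalSpace K]

theorem isNormingFamily_iff_of_continuous [CompactSpace K] {φ : K → E →L[𝕜] F}
    (hφ : ∀ x, Continuous fun k => φ k x) :
    IsNormingFamily φ ↔
      ∃ C > (0 : ℝ), ∀ x, C⁻¹ * (⨆ k, ‖φ k x‖) ≤ ‖x‖ ∧ ‖x‖ ≤ C * ⨆ k, ‖φ k x‖ :=
  and_iff_right fun x => (isCompact_range (hφ x).norm).bddAbove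

theorem isNormingFamily_evalCLM_comp_iff {T : E →L[𝕜] K →ᵇ F} :
    IsNormingFamily (fun k => (evalCLM 𝕜 k).comp T) ↔ ∃ c > (0 : ℝ), ∀ x, c * ‖x‖ ≤ ‖T x‖ := by
  have bddAbove_norm_apply (x : E) : BddAbove (range fun k => ‖T x k‖) :=
    bddAbove_range_norm_comp (T x)
  simp only [IsNormingFamily, ContinuousLinearMap.comp_apply, evalCLM_apply, ← norm_eq_iSup_norm]
  rw [and_iff_right bddAbove_norm_apply, exists_two_sided_bound_iff norm_nonneg,
    and_iff_right ⟨‖T‖, T.le_opNorm⟩]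

theorem exists_evalCLM_comp_eq {φ : K → E →L[𝕜] F} (hφ : ∀ x, Continuous fun k => φ k x)
    {C : ℝ} (hC : 0 ≤ C) (hφC : ∀ k x, ‖φ k x‖ ≤ C * ‖x‖) :
    ∃ T : E →L[𝕜] K →ᵇ F, (fun k => (evalCLM 𝕜 k).comp T) = φ := by
  let L : E →ₗ[𝕜] K →ᵇ F :=
    { toFun := fun x => ofNormedAddCommGroup (fun k => φ k x) (hφ x) (C * ‖x‖) (hφC · x)
      map_add' := fun x y => by ext k; simp
      map_smul' := fun a x => by ext k; simp }
  have norm_L_le (x : E) : ‖L x‖ ≤ C * ‖x‖ := (norm_le (by positivity)).2 (hφC · x)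
  exact ⟨L.mkContinuous C norm_L_le, rfl⟩

theorem embeds_in_CK_iff_norming_weakStar_image_general :
    (∃ T : E →L[𝕜] K →ᵇ F, ∃ c > (0 : ℝ), ∀ x, c * ‖x‖ ≤ ‖T x‖) ↔
      ∃ φ : K → E →L[𝕜] F, (∀ x, Continuous fun k => φ k x) ∧ IsNormingFamily φ := by
  constructor
  · rintro ⟨T, hT⟩
    exact ⟨_, fun x => (T x).continuous, isNormingFamily_evalCLM_comp_iff.2 hT⟩
  · rintro ⟨φ, hφ, hnorming⟩
    obtain ⟨C, hC, hφC⟩ := hnorming.exists_norm_apply_le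
    obtain ⟨T, rfl⟩ := exists_evalCLM_comp_eq hφ hC hφC
    exact ⟨T, isNormingFamily_evalCLM_comp_iff.1 hnorming⟩

end NormingFamily

/-- A Banach space `E` is isomorphic to a subspace of `C(K)`, `K` compact Hausdorff
(equivalently, of the space of bounded continuous functions on `K`), if and only if the
dual `E'` contains a norming subset `W` which, in the weak* topology, is a continuous
image of `K` — i.e. there is a map `φ : K → E'`, continuous into the weak* topology,
whose range is norming. -/
theorem embeds_in_CK_iff_norming_weakStar_image
    (E : Type*) [NormedAddCommGroup E] [NormedSpace ℝ E] [CompleteSpace E]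
    (K : Type*) [TopologicalSpace K] [CompactSpace K] [T2Space K] :
    (∃ T : E →L[ℝ] BoundedContinuousFunction K ℝ,
        ∃ c > (0 : ℝ), ∀ x : E, c * ‖x‖ ≤ ‖T x‖) ↔
    (∃ φ : K → (E →L[ℝ] ℝ), (∀ x : E, Continuous fun k => φ k x) ∧
        ∃ C > (0 : ℝ), ∀ x : E,
          C⁻¹ * (⨆ k, |φ k x|) ≤ ‖x‖ ∧ ‖x‖ ≤ C * ⨆ k, |φ k x|) := by
  rw [embeds_in_CK_iff_norming_weakStar_image_general]
  exact exists_congr fun φ => and_congr_right isNormingFamily_iff_of_continuous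
end

section
/- Let M be a nondegenerate Orlicz function. Suppose there exist a compact, hereditary subset K of P_<∞(ℕ) and a constant η > 0 such that η‖a‖_M ≤ sup{ ‖a χ_A‖_M : A ∈ K } for every a ∈ h_M, where a χ_A denotes the sequence equal to a on A and 0 elsewhere. Then lim_{t→0} M(ηt/2)/M(t) = 0. -/
open Ordinal Filter Topology

/-! A sequence `u n → 0⁺` with `δ * M (u n) ≤ M (θ * u n)`, where `θ < η`, would produce a
finitely supported vector `a` whose entries are values of `u`, such that `∑ k, M (θ * a k)` is
large but its part over every `A ∈ K` is at most `δ`; then `‖a‖ ≥ 1 / θ` and `‖a χ_A‖ ≤ 1`,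
against norming. The existence of such a support is a form of Pták's combinatorial lemma: as `K`
is compact and consists of finite sets, there is no infinite increasing chain of finite sets
inside members of `K`, so each trace `A ∩ E` has an ordinal rank. When many light blocks are
placed one after the other, the rank of the trace of `A` drops at the first block that `A` meets,
so that by induction the later blocks can be chosen to have almost no weight on `A`. -/

section LightBlocks

variable {ι : Type*} [DecidableEq ι] {w : ι → ℝ}

/-- Pták-type smallness of a family `𝒜` of finite sets relative to the weight `w`: away from `E`
there are finite blocks of any prescribed total weight `c`, up to a factor of two, on which every
member of `𝒜` has weight at most `ε`. The factor leaves room for reaching `c` by adding up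
single weights. -/
def HasLightBlocks (w : ι → ℝ) (E : Finset ι) (𝒜 : Set (Finset ι)) : Prop :=
  ∀ ⦃ε c : ℝ⦄, 0 < ε → 0 < c → ∃ F : Finset ι, Disjoint E F ∧
    ∑ i ∈ F, w i ∈ Set.Icc c (2 * c) ∧ ∀ A ∈ 𝒜, ∑ i ∈ A ∩ F, w i ≤ ε

lemma HasLightBlocks.mono {E : Finset ι} {𝒜 ℬ : Set (Finset ι)}
    (hℬ : HasLightBlocks w E ℬ) (h𝒜ℬ : 𝒜 ⊆ ℬ) : HasLightBlocks w E 𝒜 := fun _ _ hε hc =>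
  let ⟨F, hEF, hmass, hlight⟩ := hℬ hε hc
  ⟨F, hEF, hmass, fun A hA => hlight A (h𝒜ℬ hA)⟩

lemma hasLightBlocks_empty_of_infinite_fibers
    (hfib : ∀ e > 0, ∃ v, 0 < v ∧ v < e ∧ {i | w i = v}.Infinite) (E : Finset ι) :
    HasLightBlocks w E ∅ := by
  intro ε c _ hc
  obtain ⟨v, hv, hvc, hinf⟩ := hfib c hc
  obtain ⟨F, hF, hcard⟩ := (hinf.sdiff E.finite_toSet).exists_subset_card_eq ⌈c / v⌉₊
  have hsum : ∑ i ∈ F, w i = ⌈c / v⌉₊ * v := by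
    rw [Finset.sum_congr rfl fun i hi => (hF hi).1, Finset.sum_const, hcard, _root_.nsmul_eq_mul]
  refine ⟨F, Finset.disjoint_right.2 fun i hi => (hF hi).2, ?_, by simp⟩
  rw [hsum]
  constructor
  · exact (div_le_iff₀ hv).1 (Nat.le_ceil _)
  · calc ⌈c / v⌉₊ * v ≤ (c / v + 1) * v := by
          gcongr; exact (Nat.ceil_lt_add_one (by positivity)).le
      _ = c + v := by field_simp
      _ ≤ 2 * c := by linarith

variable {α : Type*} [LinearOrder α] {𝓕 : Set (Finset ι)} {ρ : Finset ι → α}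

/-- Iterating `m` times: a set `A` pays the full weight only of the first block it meets, since its
rank drops there. -/
lemma exists_block_sum_inter_le (hw : ∀ i, 0 ≤ w i) (h𝓕 : IsLowerSet 𝓕) (hρ : StrictAntiOn ρ 𝓕)
    {β : α} (hβ : ∀ E, HasLightBlocks w E {A ∈ 𝓕 | ρ (A ∩ E) < β}) (E : Finset ι) {ε c : ℝ}
    (hε : 0 < ε) (hc : 0 < c) (m : ℕ) :
    ∃ F : Finset ι, Disjoint E F ∧ ∑ i ∈ F, w i ∈ Set.Icc (m * c) (m * (2 * c)) ∧
      ∀ A ∈ 𝓕, ρ (A ∩ E) ≤ β → ∑ i ∈ A ∩ F, w i ≤ 2 * c + m * ε := by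
  induction m with
  | zero => exact ⟨∅, by simp, by simp, fun _ _ _ => by simpa using hc.le⟩
  | succ m ih =>
    obtain ⟨F, hEF, ⟨hF_ge, hF_le⟩, hF⟩ := ih
    obtain ⟨G, hG_disj, ⟨hG_ge, hG_le⟩, hG⟩ := hβ (E ∪ F) hε hc
    obtain ⟨hEG, hFG⟩ := Finset.disjoint_union_left.1 hG_disj
    refine ⟨F ∪ G, Finset.disjoint_union_right.2 ⟨hEF, hEG⟩, ?_, fun A hA hAβ => ?_⟩
    · rw [Finset.sum_union hFG]
      push_cast
      constructor <;> linarith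
    have hsplit : ∑ i ∈ A ∩ (F ∪ G), w i = ∑ i ∈ A ∩ F, w i + ∑ i ∈ A ∩ G, w i := by
      rw [Finset.inter_union_distrib_left,
        Finset.sum_union (hFG.mono Finset.inter_subset_right Finset.inter_subset_right)]
    rw [hsplit]
    push_cast
    rcases (A ∩ F).eq_empty_or_nonempty with hAF | ⟨j, hj⟩
    · have hAG : ∑ i ∈ A ∩ G, w i ≤ ∑ i ∈ G, w i :=
        Finset.sum_le_sum_of_subset_of_nonneg Finset.inter_subset_right fun i _ _ => hw i
      have : 0 ≤ ((m : ℝ) + 1) * ε := by positivity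
      rw [hAF, Finset.sum_empty]
      linarith
    · obtain ⟨hjA, hjF⟩ := Finset.mem_inter.1 hj
      have hssub : A ∩ E ⊂ A ∩ (E ∪ F) :=
        (Finset.ssubset_iff_of_subset (by gcongr; exact Finset.subset_union_left)).2
          ⟨j, by simp [hjA, hjF], fun h => Finset.disjoint_right.1 hEF hjF (Finset.mem_inter.1 h).2⟩
      have hrank : ρ (A ∩ (E ∪ F)) < ρ (A ∩ E) :=
        hρ (h𝓕 Finset.inter_subset_left hA) (h𝓕 Finset.inter_subset_left hA) hssub
      have hAG := hG A ⟨hA, hrank.trans_le hAβ⟩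
      have hAF := hF A hA hAβ
      linarith

lemma hasLightBlocks_rank_le (hw : ∀ i, 0 ≤ w i) (h𝓕 : IsLowerSet 𝓕) (hρ : StrictAntiOn ρ 𝓕)
    {β : α} (hβ : ∀ E, HasLightBlocks w E {A ∈ 𝓕 | ρ (A ∩ E) < β}) (E : Finset ι) :
    HasLightBlocks w E {A ∈ 𝓕 | ρ (A ∩ E) ≤ β} := by
  intro ε c hε hc
  obtain ⟨m, hm⟩ := exists_nat_gt (4 * c / ε)
  have hm_pos : (0 : ℝ) < m := (by positivity : 0 ≤ 4 * c / ε).trans_lt hm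
  obtain ⟨F, hEF, hmass, hF⟩ := exists_block_sum_inter_le hw h𝓕 hρ hβ E
    (ε := ε / (2 * m)) (c := c / m) (by positivity) (by positivity) m
  have hmass_eq : m * (c / m) = c ∧ m * (2 * (c / m)) = 2 * c := by constructor <;> field_simp
  rw [hmass_eq.1, hmass_eq.2] at hmass
  refine ⟨F, hEF, hmass, fun A hA => (hF A hA.1 hA.2).trans ?_⟩
  have hfirst : 2 * (c / m) ≤ ε / 2 := by
    rw [div_lt_iff₀ hε] at hm
    rw [← mul_div_assoc, div_le_iff₀ hm_pos]
    linarith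
  have hlater : m * (ε / (2 * m)) = ε / 2 := by field_simp
  linarith

lemma hasLightBlocks_rank_lt [WellFoundedLT α] (hw : ∀ i, 0 ≤ w i) (h𝓕 : IsLowerSet 𝓕)
    (hρ : StrictAntiOn ρ 𝓕) (hempty : ∀ E, HasLightBlocks w E ∅) (β : α) (E : Finset ι) :
    HasLightBlocks w E {A ∈ 𝓕 | ρ (A ∩ E) < β} := by
  induction β using WellFoundedLT.induction generalizing E with
  | ind β ih =>
    let traces := E.powerset.filter fun s => ρ s < β
    have mem_traces {A : Finset ι} (hA : ρ (A ∩ E) < β) : A ∩ E ∈ traces :=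
      Finset.mem_filter.2 ⟨Finset.mem_powerset.2 Finset.inter_subset_right, hA⟩
    rcases traces.eq_empty_or_nonempty with h | h
    · exact (hempty E).mono fun A hA => by simpa [h] using mem_traces hA.2
    · obtain ⟨s, hs, hmax⟩ := traces.exists_max_image ρ h
      have hs_le := hasLightBlocks_rank_le hw h𝓕 hρ (ih (ρ s) (Finset.mem_filter.1 hs).2) E
      exact hs_le.mono fun A hA => ⟨hA.1, hmax _ (mem_traces hA.2)⟩

theorem hasLightBlocks_of_wellFoundedOn (hw : ∀ i, 0 ≤ w i) (h𝓕 : IsLowerSet 𝓕)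
    (hwf : 𝓕.WellFoundedOn (· > ·)) (hempty : ∀ E, HasLightBlocks w E ∅) (E : Finset ι) :
    HasLightBlocks w E 𝓕 := by
  have : IsWellFounded (Finset ι) fun s t => s > t ∧ s ∈ 𝓕 ∧ t ∈ 𝓕 :=
    ⟨Set.wellFoundedOn_iff.1 hwf⟩
  let ρ := IsWellFounded.rank fun s t : Finset ι => s > t ∧ s ∈ 𝓕 ∧ t ∈ 𝓕
  have hρ : StrictAntiOn ρ 𝓕 := fun _ hs _ ht hst =>
    IsWellFounded.rank_lt_of_rel ⟨hst, ht, hs⟩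
  have hle := hasLightBlocks_rank_le hw h𝓕 hρ (hasLightBlocks_rank_lt hw h𝓕 hρ hempty (ρ ∅)) E
  refine hle.mono fun A hA => ⟨hA, ?_⟩
  exact hρ.antitoneOn (h𝓕 (Finset.empty_subset _) hA) (h𝓕 Finset.inter_subset_left hA)
    (Finset.empty_subset _)

end LightBlocks

section FiniteSubsets

variable {ι : Type*}

/-- The finite sets contained in a member of the family `K`, whose members are coded by points of
`2^ι` as in `toSet`. -/
def finiteSubsets (K : Set (ι → Bool)) : Set (Finset ι) :=
  {s | ∃ x ∈ K, ∀ i ∈ s, x i = true}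

lemma isLowerSet_finiteSubsets (K : Set (ι → Bool)) : IsLowerSet (finiteSubsets K) :=
  fun _ _ hts ⟨x, hx, hsx⟩ => ⟨x, hx, fun i hi => hsx i (hts hi)⟩

lemma wellFoundedOn_finiteSubsets {K : Set (ι → Bool)} (hK : IsCompact K)
    (hfin : ∀ x ∈ K, {i | x i = true}.Finite) : (finiteSubsets K).WellFoundedOn (· > ·) := by
  rw [Set.wellFoundedOn_iff_no_descending_seq]
  intro f hf
  have hmono : Monotone f := fun m n hmn => hmn.eq_or_lt.elim (fun h => h ▸ le_rfl)
    fun h => (f.map_rel_iff.2 h).le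
  let C (n : ℕ) : Set (ι → Bool) := {x ∈ K | ∀ i ∈ f n, x i = true}
  have hC_closed (n : ℕ) : IsClosed (C n) := by
    simp only [C, Set.ofPred_and, Set.ofPred_forall]
    exact hK.isClosed.inter <| isClosed_biInter fun i _ =>
      isClosed_eq (continuous_apply i) continuous_const
  obtain ⟨x, hx⟩ := IsCompact.nonempty_iInter_of_sequence_nonempty_isCompact_isClosed C
    (fun n _ hx => ⟨hx.1, fun i hi => hx.2 i (hmono n.le_succ hi)⟩) hf
    (hK.of_isClosed_subset (hC_closed 0) fun _ hx => hx.1) hC_closed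
  rw [Set.mem_iInter] at hx
  have hsub (n : ℕ) : f n ∈ (hfin x (hx 0).1).toFinset.powerset :=
    Finset.mem_powerset.2 fun i hi => (Set.Finite.mem_toFinset _).2 ((hx n).2 i hi)
  exact Set.infinite_of_injective_forall_mem f.injective hsub (Finset.finite_toSet _)

end FiniteSubsets

section OrliczNorm

variable {M : ℝ → ℝ}

lemma IsOrlicz.nonneg (hM : IsOrlicz M) {x : ℝ} (hx : 0 ≤ x) : 0 ≤ M x :=
  hx.eq_or_lt.elim (fun h => h ▸ hM.zero.ge) fun h => (hM.pos x h).le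

lemma IsOrlicz.map_mul_le (hM : IsOrlicz M) {c x : ℝ} (hc₀ : 0 ≤ c) (hc₁ : c ≤ 1) (hx : 0 ≤ x) :
    M (c * x) ≤ c * M x := by
  simpa [hM.zero] using hM.convex.2 (Set.mem_Ici.2 hx) Set.self_mem_Ici hc₀
    (sub_nonneg.2 hc₁) (add_sub_cancel c 1)

lemma orliczNorm_le {a : ℕ → ℝ} {r : ℝ} (hr : 0 < r) (h : ∑' k, M (|a k| / r) ≤ 1) :
    orliczNorm M a ≤ r :=
  csInf_le ⟨0, fun _ h => h.1.le⟩ ⟨hr, h⟩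

lemma MemHM.summable_div {a : ℕ → ℝ} (ha : MemHM M a) (r : ℝ) :
    Summable fun k => M (|a k| / r) := by
  simpa only [div_eq_inv_mul] using ha r⁻¹

lemma IsOrlicz.exists_tsum_div_le_one_s18 (hM : IsOrlicz M) {a : ℕ → ℝ} (ha : MemHM M a) :
    ∃ r, 0 < r ∧ ∑' k, M (|a k| / r) ≤ 1 := by
  have hsum : Summable fun k => M |a k| := by simpa using ha 1
  let r := max 1 (∑' k, M |a k|)
  have hr : 1 ≤ r := le_max_left _ _
  have hr₀ : 0 < r := one_pos.trans_le hr
  refine ⟨r, hr₀, ?_⟩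
  calc ∑' k, M (|a k| / r) ≤ ∑' k, r⁻¹ * M |a k| :=
        (ha.summable_div r).tsum_le_tsum (fun k => by
          rw [div_eq_inv_mul]
          exact hM.map_mul_le (by positivity) (inv_le_one_of_one_le₀ hr) (abs_nonneg _))
          (hsum.mul_left _)
    _ = r⁻¹ * ∑' k, M |a k| := tsum_mul_left
    _ ≤ 1 := inv_mul_le_one_of_le₀ (le_max_right _ _) hr₀.le

lemma IsOrlicz.le_orliczNorm (hM : IsOrlicz M) {a : ℕ → ℝ} (ha : MemHM M a) {r : ℝ}
    (h : 1 < ∑' k, M (|a k| / r)) : r ≤ orliczNorm M a := by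
  refine le_csInf (hM.exists_tsum_div_le_one_s18 ha) fun s ⟨hs, hs₁⟩ => ?_
  by_contra! hsr
  refine (h.trans_le ?_).not_ge hs₁
  exact (ha.summable_div r).tsum_le_tsum (fun k => hM.mono
    (Set.mem_Ici.2 (div_nonneg (abs_nonneg _) (hs.trans hsr).le))
    (Set.mem_Ici.2 (by positivity)) (by gcongr)) (ha.summable_div s)

lemma memHM_indicator_finset (hM₀ : M 0 = 0) (F : Finset ℕ) (a : ℕ → ℝ) :
    MemHM M (Set.indicator F a) := fun c =>
  summable_of_ne_finset_zero (s := F) fun k hk => by simp [hk, hM₀]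

lemma tsum_indicator_finset (hM₀ : M 0 = 0) (F : Finset ℕ) (a : ℕ → ℝ) (r : ℝ) :
    ∑' k, M (|Set.indicator F a k| / r) = ∑ k ∈ F, M (|a k| / r) := by
  rw [tsum_eq_sum (s := F) fun k hk => by simp [hk, hM₀]]
  exact Finset.sum_congr rfl fun k hk => by simp [hk]

end OrliczNorm

section Norming

variable {M : ℝ → ℝ}

lemma IsOrlicz.tendsto_zero (hM : IsOrlicz M) : Tendsto M (𝓝[≥] 0) (𝓝 0) := by
  refine tendsto_of_tendsto_of_tendsto_of_le_of_le' tendsto_const_nhds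
    (tendsto_nhdsWithin_of_tendsto_nhds tendsto_id) ?_ ?_
  · filter_upwards [self_mem_nhdsWithin] with x hx using hM.nonneg hx
  · filter_upwards [Icc_mem_nhdsGE one_pos] with x hx
    simpa [hM.one] using hM.map_mul_le hx.1 hx.2 zero_le_one

/-- The pairing function makes `τ` take each value of a suitable null sequence infinitely often. -/
lemma IsOrlicz.exists_seq_infinite_fibers (hM : IsOrlicz M) {θ : ℝ} (hθ : 0 < θ) {p : ℝ → Prop}
    (hp : ∃ᶠ t in 𝓝[>] 0, p t) :
    ∃ τ : ℕ → ℝ, (∀ k, 0 < τ k ∧ p (τ k)) ∧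
      ∀ e > 0, ∃ v, 0 < v ∧ v < e ∧ {k | M (θ * τ k) = v}.Infinite := by
  obtain ⟨u, hu_lim, hu⟩ :=
    exists_seq_forall_of_frequently (hp.and_eventually self_mem_nhdsWithin)
  have hθu_lim : Tendsto (fun n => θ * u n) atTop (𝓝[≥] 0) := by
    refine tendsto_nhdsWithin_iff.2 ⟨?_, .of_forall fun n => (mul_pos hθ (hu n).2).le⟩
    simpa using (tendsto_nhds_of_tendsto_nhdsWithin hu_lim).const_mul θ
  refine ⟨fun k => u k.unpair.1, fun k => ⟨(hu _).2, (hu _).1⟩, fun e he => ?_⟩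
  obtain ⟨n, hn⟩ := ((hM.tendsto_zero.comp hθu_lim).eventually_lt_const he).exists
  refine ⟨M (θ * u n), hM.pos _ (mul_pos hθ (hu n).2), hn, ?_⟩
  exact Set.infinite_of_injective_forall_mem (f := Nat.pair n)
    (fun i j hij => (Nat.pair_eq_pair.1 hij).2) fun j => by simp

lemma IsOrlicz.exists_orliczNorm_indicator_le_one (hM : IsOrlicz M) {K : Set (ℕ → Bool)}
    (hKfin : ∀ x ∈ K, (toSet x).Finite) (hK : IsCompact K) {θ δ : ℝ} (hθ : 0 < θ) (hδ : 0 < δ)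
    (hfreq : ∃ᶠ t in 𝓝[>] 0, δ * M t ≤ M (θ * t)) :
    ∃ a, MemHM M a ∧ θ⁻¹ ≤ orliczNorm M a ∧
      ∀ x ∈ K, orliczNorm M (Set.indicator (toSet x) a) ≤ 1 := by
  obtain ⟨τ, hτ, hfib⟩ := hM.exists_seq_infinite_fibers hθ hfreq
  have hτ_abs (k : ℕ) : |τ k| = τ k := abs_of_pos (hτ k).1
  obtain ⟨F, -, ⟨hF, -⟩, hlight⟩ := hasLightBlocks_of_wellFoundedOn
    (fun k => hM.nonneg (mul_pos hθ (hτ k).1).le) (isLowerSet_finiteSubsets K)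
    (wellFoundedOn_finiteSubsets hK hKfin) (hasLightBlocks_empty_of_infinite_fibers hfib)
    ∅ hδ two_pos
  have hmem : MemHM M (Set.indicator F τ) := memHM_indicator_finset hM.zero F τ
  refine ⟨_, hmem, hM.le_orliczNorm hmem ?_, fun x hx => orliczNorm_le one_pos ?_⟩
  · calc (1 : ℝ) < ∑ k ∈ F, M (θ * τ k) := one_lt_two.trans_le hF
      _ = ∑' k, M (|Set.indicator F τ k| / θ⁻¹) := by
        simp_rw [tsum_indicator_finset hM.zero, hτ_abs, div_inv_eq_mul, mul_comm]
  · let A := (hKfin x hx).toFinset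
    have hA : A ∈ finiteSubsets K := ⟨x, hx, fun i hi => (hKfin x hx).mem_toFinset.1 hi⟩
    have hind : Set.indicator (toSet x) (Set.indicator F τ) = Set.indicator ↑(A ∩ F) τ := by
      simp [Set.indicator_indicator, A]
    rw [hind, tsum_indicator_finset hM.zero]
    refine le_of_mul_le_mul_left ?_ hδ
    calc δ * ∑ k ∈ A ∩ F, M (|τ k| / 1) = ∑ k ∈ A ∩ F, δ * M (τ k) := by
          simp_rw [Finset.mul_sum, hτ_abs, _root_.div_one]
      _ ≤ ∑ k ∈ A ∩ F, M (θ * τ k) := Finset.sum_le_sum fun k _ => (hτ k).2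
      _ ≤ δ * 1 := by simpa using hlight A hA

theorem orlicz_limit_of_norming_general (hM : IsOrlicz M) {K : Set (ℕ → Bool)}
    (hKfin : ∀ x ∈ K, (toSet x).Finite) (hK : IsCompact K) {η : ℝ}
    (hnorming : ∀ a : ℕ → ℝ, MemHM M a →
      η * orliczNorm M a ≤ ⨆ A : K, orliczNorm M (Set.indicator (toSet A.1) a))
    {θ : ℝ} (hθ : 0 < θ) (hθη : θ < η) :
    Tendsto (fun t => M (θ * t) / M t) (𝓝[>] 0) (𝓝 0) := by
  refine Metric.tendsto_nhds.2 fun δ hδ => ?_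
  by_contra hnot
  have hfreq : ∃ᶠ t in 𝓝[>] 0, δ * M t ≤ M (θ * t) := by
    refine ((not_eventually.1 hnot).and_eventually self_mem_nhdsWithin).mono fun t ⟨ht, ht₀⟩ => ?_
    have hMt : 0 < M t := hM.pos t ht₀
    have hMθt : 0 < M (θ * t) := hM.pos _ (mul_pos hθ ht₀)
    rwa [Real.dist_0_eq_abs, abs_of_pos (div_pos hMθt hMt), not_lt, le_div_iff₀ hMt] at ht
  obtain ⟨a, ha, hlarge, hsmall⟩ :=
    hM.exists_orliczNorm_indicator_le_one hKfin hK hθ hδ hfreq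
  refine lt_irrefl (1 : ℝ) ?_
  calc
    1 = θ * θ⁻¹ := (mul_inv_cancel₀ hθ.ne').symm
    _ < η * θ⁻¹ := by gcongr
    _ ≤ η * orliczNorm M a := by have := hθ.trans hθη; gcongr
    _ ≤ ⨆ A : K, orliczNorm M (Set.indicator (toSet A.1) a) := hnorming a ha
    _ ≤ 1 := Real.iSup_le (fun A => hsmall A.1 A.2) zero_le_one

end Norming

/-- Let `M` be a nondegenerate Orlicz function.  Suppose there are a compact hereditary
family `K ⊆ P_<∞(ℕ)` (coded in the Cantor space `2^ℕ`) and `η > 0` with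
`η ‖a‖_M ≤ sup { ‖a χ_A‖_M : A ∈ K }` for every `a ∈ h_M`.  Then
`lim_{t→0} M(ηt/2)/M(t) = 0`. -/
theorem orlicz_limit_of_norming (M : ℝ → ℝ) (hM : IsOrlicz M)
    (K : Set (ℕ → Bool))
    (hKfin : ∀ x ∈ K, (toSet x).Finite)
    (hKcpt : IsCompact K)
    (hKher : ∀ x y : ℕ → Bool, (∀ n, x n = true → y n = true) → y ∈ K → x ∈ K)
    (η : ℝ) (hη : 0 < η)
    (hnorming : ∀ a : ℕ → ℝ, MemHM M a →
      η * orliczNorm M a ≤ ⨆ A : K, orliczNorm M (Set.indicator (toSet A.1) a)) :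
    Filter.Tendsto (fun t => M (η * t / 2) / M t) (𝓝[>] (0 : ℝ)) (𝓝 0) := by
  simpa only [mul_div_right_comm] using orlicz_limit_of_norming_general hM hKfin hKcpt hnorming
    (half_pos hη) (half_lt_self hη)
end
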